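/- Laplace asymptotics for the partition function: suppose V : R^n → R is twice continuously differentiable, attains its global minimum at a unique point q_* with K := V''(q_*) positive definite, M : R^n → positive definite symmetric matrices is continuous with det M bounded, and ∫ e^{−βV} sqrt(det M) dq < ∞ for all β > 0. Then Z(β) := (2πT)^{n/2} ∫ e^{−βV(q)} sqrt(det M(q)) dq satisfies Z(β) ~ (2πT)^n e^{−βV(q_*)} sqrt(det M(q_*)/det K) as T = 1/β → 0+. -/

import Mathlib

open scoped BigOperators
open Real Matrix MeasureTheory Filter

/-!
Subtract `V q_*` and rescale `q = q_* + y / √β`. By Taylor's theorem at the critical point `q_*`,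
`β (V q - V q_*)` then tends to `⟨y, K y⟩ / 2` pointwise, and on a small ball around `q_*` it is at
least `c ‖y‖²` since `K` is positive definite, so dominated convergence gives a Gaussian integral
there. Outside the ball `V` exceeds `V q_*` by some `ε > 0`, which makes that part of the integral
`O(e^{-β ε})`, negligible against any power of `β`.
-/

open Module Asymptotics Topology

section SecondOrder

variable {E F : Type*} [NormedAddCommGroup E] [NormedSpace ℝ E]
  [NormedAddCommGroup F] [NormedSpace ℝ F]

lemma hasFDerivAt_half_smul_apply_self {B : E →L[ℝ] E →L[ℝ] F}
    (hB : ∀ u v, B u v = B v u) (x : E) :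
    HasFDerivAt (fun x => (1 / 2 : ℝ) • B x x) (B x) x := by
  convert! (B.hasFDerivAt.clm_apply (hasFDerivAt_id x)).const_smul (1 / 2 : ℝ) using 1
  ext v
  norm_num [hB v x, ← add_smul]

theorem taylor_two_isLittleO {f : E → F} {x₀ : E} (hf : ContDiffAt ℝ 2 f x₀) :
    (fun x => f x - f x₀ - fderiv ℝ f x₀ (x - x₀)
      - (1 / 2 : ℝ) • fderiv ℝ (fderiv ℝ f) x₀ (x - x₀) (x - x₀))
        =o[𝓝 x₀] fun x => ‖x - x₀‖ ^ 2 := by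
  set B := fderiv ℝ (fderiv ℝ f) x₀
  have hsymm : ∀ u v, B u v = B v u := hf.isSymmSndFDerivAt (by simp)
  obtain ⟨r, hr, hdiff⟩ : ∃ r > 0, ∀ x ∈ Metric.ball x₀ r, DifferentiableAt ℝ f x :=
    Metric.eventually_nhds_iff_ball.1 <|
      (hf.eventually (by simp)).mono fun x hx => hx.differentiableAt (by norm_num)
  have hderiv : ∀ x ∈ Metric.ball x₀ r, HasFDerivWithinAt
      (fun x => f x - f x₀ - fderiv ℝ f x₀ (x - x₀) - (1 / 2 : ℝ) • B (x - x₀) (x - x₀))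
      (fderiv ℝ f x - fderiv ℝ f x₀ - B (x - x₀)) (Metric.ball x₀ r) x := fun x hx => by
    have hlin := (fderiv ℝ f x₀).hasFDerivAt.comp x ((hasFDerivAt_id x).sub_const x₀)
    have hquad := (hasFDerivAt_half_smul_apply_self hsymm (x - x₀)).comp x
      ((hasFDerivAt_id x).sub_const x₀)
    exact ((((hdiff x hx).hasFDerivAt.sub_const (f x₀)).sub hlin).sub hquad).hasFDerivWithinAt
  have hderiv_isLittleO : (fun x => fderiv ℝ f x - fderiv ℝ f x₀ - B (x - x₀))
      =o[𝓝[Metric.ball x₀ r] x₀] fun x => ‖x - x₀‖ ^ 1 := by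
    have hfderiv : DifferentiableAt ℝ (fderiv ℝ f) x₀ :=
      (hf.fderiv_right (m := 1) (by norm_num)).differentiableAt (by norm_num)
    simpa only [pow_one] using (hfderiv.hasFDerivAt.isLittleO.mono nhdsWithin_le_nhds).norm_right
  simpa [nhdsWithin_eq_nhds.2 (Metric.ball_mem_nhds x₀ hr)] using
    (convex_ball x₀ r).isLittleO_pow_succ (Metric.mem_ball_self hr) hderiv hderiv_isLittleO

lemma isCoercive_of_pos [FiniteDimensional ℝ E] {B : E →L[ℝ] E →L[ℝ] ℝ}
    (hB : ∀ x ≠ 0, 0 < B x x) : IsCoercive B := by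
  have : ProperSpace E := FiniteDimensional.proper_real E
  rcases subsingleton_or_nontrivial E with _ | _
  · exact ⟨1, one_pos, fun x => by simp [Subsingleton.elim x 0]⟩
  obtain ⟨u, hu, hmin⟩ := (isCompact_sphere (0 : E) 1).exists_isMinOn
    (NormedSpace.sphere_nonempty.2 zero_le_one) (f := fun x => B x x) (by fun_prop)
  have hu0 : u ≠ 0 := Metric.ne_of_mem_sphere hu one_ne_zero
  refine ⟨B u u, hB u hu0, fun x => ?_⟩
  rcases eq_or_ne x 0 with rfl | hx
  · simp
  have hscale : B u u ≤ B (‖x‖⁻¹ • x) (‖x‖⁻¹ • x) := hmin (by simp [norm_smul, hx])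
  simp only [map_smul, _root_.smul_apply, smul_eq_mul, ← mul_assoc] at hscale
  calc B u u * ‖x‖ * ‖x‖ ≤ ‖x‖⁻¹ * ‖x‖⁻¹ * B x x * ‖x‖ * ‖x‖ := by gcongr
    _ = B x x := by field_simp

lemma exists_pos_eventually_mul_sq_norm_le {B : E →L[ℝ] E →L[ℝ] ℝ} (hB : IsCoercive B)
    {φ : E → ℝ} (hφ : (fun x => φ x - 1 / 2 * B x x) =o[𝓝 0] fun x => ‖x‖ ^ 2) :
    ∃ c > 0, ∀ᶠ x in 𝓝 0, c * ‖x‖ ^ 2 ≤ φ x := by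
  obtain ⟨C, hC, hBC⟩ := hB
  refine ⟨C / 4, by positivity, ?_⟩
  filter_upwards [isLittleO_iff.1 hφ (show 0 < C / 4 by positivity)] with x hx
  rw [Real.norm_eq_abs, norm_pow, norm_norm] at hx
  linarith [(abs_le.1 hx).1, hBC x]

lemma tendsto_inv_smul_atTop_nhds_zero (y : E) :
    Tendsto (fun s : ℝ => s⁻¹ • y) atTop (𝓝 0) := by
  simpa using (tendsto_inv_atTop_zero (𝕜 := ℝ)).smul_const y

lemma tendsto_sq_mul_comp_inv_smul {B : E →L[ℝ] E →L[ℝ] ℝ} {φ : E → ℝ}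
    (hφ : (fun x => φ x - 1 / 2 * B x x) =o[𝓝 0] fun x => ‖x‖ ^ 2) (y : E) :
    Tendsto (fun s : ℝ => s ^ 2 * φ (s⁻¹ • y)) atTop (𝓝 (1 / 2 * B y y)) := by
  have hrem : (fun s : ℝ => s ^ 2 * φ (s⁻¹ • y) - 1 / 2 * B y y) =o[atTop] fun _ => ‖y‖ ^ 2 := by
    refine ((isBigO_refl (fun s : ℝ => s ^ 2) atTop).mul_isLittleO
      (hφ.comp_tendsto (tendsto_inv_smul_atTop_nhds_zero y))).congr' ?_ ?_ <;>
      filter_upwards [eventually_ne_atTop 0] with s hs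
    · simp only [Function.comp_apply, map_smul, _root_.smul_apply, smul_eq_mul]
      field_simp
    · simp only [Function.comp_apply, norm_smul, norm_inv, mul_pow, inv_pow, Real.norm_eq_abs,
        sq_abs]
      field_simp
  have hlim := (isLittleO_one_iff ℝ).1 <|
    hrem.trans_isBigO (isBigO_const_const (‖y‖ ^ 2) one_ne_zero atTop)
  simpa using hlim.add_const (1 / 2 * B y y)

lemma tendsto_indicator_exp_neg_sq_mul_smul {B : E →L[ℝ] E →L[ℝ] ℝ} {φ : E → ℝ} {g : E → F}
    {S : Set E} (hφ : (fun x => φ x - 1 / 2 * B x x) =o[𝓝 0] fun x => ‖x‖ ^ 2)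
    (hg : ContinuousAt g 0) (hS : S ∈ 𝓝 0) (y : E) :
    Tendsto (fun s : ℝ => S.indicator (fun x => rexp (-(s ^ 2 * φ x)) • g x) (s⁻¹ • y)) atTop
      (𝓝 (rexp (-(1 / 2 * B y y)) • g 0)) := by
  have hy := tendsto_inv_smul_atTop_nhds_zero y
  have hexp := (Real.continuous_exp.tendsto _).comp (tendsto_sq_mul_comp_inv_smul hφ y).neg
  refine (hexp.smul (hg.tendsto.comp hy)).congr' ?_
  filter_upwards [hy.eventually_mem hS] with s hs
  rw [Set.indicator_of_mem hs]
  rfl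

lemma norm_indicator_exp_neg_sq_mul_smul_le {φ : E → ℝ} {g : E → F} {S : Set E} {c C : ℝ}
    (hS0 : 0 ∈ S) (hφ : ∀ x ∈ S, c * ‖x‖ ^ 2 ≤ φ x) (hg : ∀ x ∈ S, ‖g x‖ ≤ C)
    {s : ℝ} (hs : 0 < s) (y : E) :
    ‖S.indicator (fun x => rexp (-(s ^ 2 * φ x)) • g x) (s⁻¹ • y)‖ ≤
      C * rexp (-c * ‖y‖ ^ 2) := by
  have hC : 0 ≤ C := (norm_nonneg _).trans (hg 0 hS0)
  by_cases hy : s⁻¹ • y ∈ S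
  · have hquad : c * ‖y‖ ^ 2 ≤ s ^ 2 * φ (s⁻¹ • y) := by
      calc c * ‖y‖ ^ 2 = s ^ 2 * (c * ‖s⁻¹ • y‖ ^ 2) := by
            rw [norm_smul, norm_inv, Real.norm_of_nonneg hs.le]
            field_simp
        _ ≤ s ^ 2 * φ (s⁻¹ • y) := by gcongr; exact hφ _ hy
    rw [Set.indicator_of_mem hy, norm_smul, Real.norm_of_nonneg (Real.exp_pos _).le, mul_comm,
      neg_mul]
    gcongr
    exact hg _ hy
  · rw [Set.indicator_of_notMem hy, norm_zero]
    positivity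

end SecondOrder

section LaplaceMethod

variable {E F : Type*} [NormedAddCommGroup E] [NormedSpace ℝ E] [MeasurableSpace E] [BorelSpace E]
  [FiniteDimensional ℝ E] [NormedAddCommGroup F] [NormedSpace ℝ F]
  {μ : Measure E}

lemma integrable_exp_neg_mul_sq_norm [μ.IsAddHaarMeasure] {c : ℝ} (hc : 0 < c) :
    Integrable (fun x : E => rexp (-c * ‖x‖ ^ 2)) μ := by
  rcases subsingleton_or_nontrivial E with _ | _
  · exact Integrable.of_finite
  · rw [integrable_fun_norm_addHaar μ (f := fun r => rexp (-c * r ^ 2))]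
    have hexp : (-1 : ℝ) < (finrank ℝ E - 1 : ℕ) := by
      linarith [Nat.cast_nonneg (α := ℝ) (finrank ℝ E - 1)]
    simpa using integrableOn_rpow_mul_exp_neg_mul_sq hc hexp

lemma integrable_exp_neg_mul_smul_of_le {α : Type*} [MeasurableSpace α] {ν : Measure α}
    {φ : α → ℝ} {g : α → F} {β₀ β : ℝ} (hφ : AEMeasurable φ ν) (hφ0 : ∀ x, 0 ≤ φ x)
    (hint : Integrable (fun x => rexp (-(β₀ * φ x)) • g x) ν) (hβ : β₀ ≤ β) :
    Integrable (fun x => rexp (-(β * φ x)) • g x) ν := by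
  have hsplit : (fun x => rexp (-(β * φ x)) • g x) =
      (fun x => rexp (-((β - β₀) * φ x))) • fun x => rexp (-(β₀ * φ x)) • g x := by
    ext x
    rw [Pi.smul_apply', smul_smul, ← Real.exp_add]
    ring_nf
  rw [hsplit]
  refine hint.bdd_smul 1 (by fun_prop) (ae_of_all _ fun x => ?_)
  rw [Real.norm_of_nonneg (Real.exp_pos _).le, Real.exp_le_one_iff, neg_nonpos]
  exact mul_nonneg (sub_nonneg.2 hβ) (hφ0 x)

lemma tendsto_pow_mul_exp_neg_sub_mul_atTop_nhds_zero (k : ℕ) (β₀ : ℝ) {ε : ℝ} (hε : 0 < ε) :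
    Tendsto (fun s : ℝ => s ^ k * rexp (-((s ^ 2 - β₀) * ε))) atTop (𝓝 0) := by
  have hlim := ((tendsto_rpow_mul_exp_neg_mul_atTop_nhds_zero (k / 2) ε hε).comp
    (tendsto_pow_atTop two_ne_zero)).mul_const (rexp (β₀ * ε))
  rw [zero_mul] at hlim
  refine hlim.congr' ?_
  filter_upwards [eventually_ge_atTop 0] with s hs
  rw [Function.comp_apply, Real.rpow_div_two_eq_sqrt _ (sq_nonneg s), Real.sqrt_sq hs,
    Real.rpow_natCast, mul_assoc, ← Real.exp_add]
  ring_nf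

lemma tendsto_pow_smul_integral_exp_neg_sq_mul_smul_of_ae_le {α : Type*} [MeasurableSpace α]
    {ν : Measure α} {φ : α → ℝ} {g : α → F} {β₀ ε : ℝ} (k : ℕ) (hε : 0 < ε)
    (hεφ : ∀ᵐ x ∂ν, ε ≤ φ x) (hint : Integrable (fun x => rexp (-(β₀ * φ x)) • g x) ν) :
    Tendsto (fun s : ℝ => s ^ k • ∫ x, rexp (-(s ^ 2 * φ x)) • g x ∂ν) atTop (𝓝 0) := by
  have hlim := (tendsto_pow_mul_exp_neg_sub_mul_atTop_nhds_zero k β₀ hε).mul_const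
    (∫ x, ‖rexp (-(β₀ * φ x)) • g x‖ ∂ν)
  rw [zero_mul] at hlim
  refine squeeze_zero_norm' ?_ hlim
  filter_upwards [eventually_ge_atTop 0, (tendsto_pow_atTop two_ne_zero).eventually_ge_atTop β₀]
    with s hs hsβ
  have hbound : ∀ᵐ x ∂ν, ‖rexp (-(s ^ 2 * φ x)) • g x‖ ≤
      rexp (-((s ^ 2 - β₀) * ε)) * ‖rexp (-(β₀ * φ x)) • g x‖ := by
    filter_upwards [hεφ] with x hx
    simp only [norm_smul, Real.norm_of_nonneg (Real.exp_pos _).le]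
    rw [← mul_assoc, ← Real.exp_add]
    gcongr
    nlinarith [mul_le_mul_of_nonneg_left hx (sub_nonneg.2 hsβ)]
  rw [norm_smul, Real.norm_of_nonneg (pow_nonneg hs k), mul_assoc, ← integral_const_mul]
  gcongr
  exact norm_integral_le_of_norm_le (hint.norm.const_mul _) hbound

variable [μ.IsAddHaarMeasure]

lemma tendsto_pow_finrank_smul_setIntegral_exp_neg_sq_mul_smul {B : E →L[ℝ] E →L[ℝ] ℝ}
    {φ : E → ℝ} {g : E → F} {S : Set E} {c C : ℝ}
    (hφ : (fun x => φ x - 1 / 2 * B x x) =o[𝓝 0] fun x => ‖x‖ ^ 2) (hg : ContinuousAt g 0)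
    (hS : MeasurableSet S) (hS0 : S ∈ 𝓝 0) (hc : 0 < c) (hcφ : ∀ x ∈ S, c * ‖x‖ ^ 2 ≤ φ x)
    (hgC : ∀ x ∈ S, ‖g x‖ ≤ C)
    (hmeas : ∀ᶠ s : ℝ in atTop,
      AEStronglyMeasurable (fun x => rexp (-(s ^ 2 * φ x)) • g x) μ) :
    Tendsto (fun s : ℝ => s ^ finrank ℝ E • ∫ x in S, rexp (-(s ^ 2 * φ x)) • g x ∂μ) atTop
      (𝓝 (∫ y, rexp (-(1 / 2 * B y y)) • g 0 ∂μ)) := by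
  have hrescale : ∀ᶠ s : ℝ in atTop,
      ∫ y, S.indicator (fun x => rexp (-(s ^ 2 * φ x)) • g x) (s⁻¹ • y) ∂μ =
        s ^ finrank ℝ E • ∫ x in S, rexp (-(s ^ 2 * φ x)) • g x ∂μ := by
    filter_upwards [eventually_ge_atTop 0] with s hs
    rw [Measure.integral_comp_inv_smul_of_nonneg μ _ hs, integral_indicator hS]
  refine Tendsto.congr' hrescale <|
    tendsto_integral_filter_of_dominated_convergence (fun y => C * rexp (-c * ‖y‖ ^ 2)) ?_ ?_
      ((integrable_exp_neg_mul_sq_norm hc).const_mul C) (ae_of_all _ fun y => ?_)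
  · filter_upwards [hmeas, eventually_ne_atTop 0] with s hs hs0
    exact (hs.indicator hS).comp_quasiMeasurePreserving
      (Measure.quasiMeasurePreserving_smul μ (inv_ne_zero hs0))
  · filter_upwards [eventually_gt_atTop 0] with s hs
    exact ae_of_all _ fun y =>
      norm_indicator_exp_neg_sq_mul_smul_le (mem_of_mem_nhds hS0) hcφ hgC hs y
  · exact tendsto_indicator_exp_neg_sq_mul_smul hφ hg hS0 y

lemma tendsto_pow_finrank_smul_integral_exp_neg_sq_mul_smul {B : E →L[ℝ] E →L[ℝ] ℝ}
    (hB : IsCoercive B) {φ : E → ℝ} {g : E → F} {β₀ : ℝ} (hφm : AEMeasurable φ μ)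
    (hφ : (fun x => φ x - 1 / 2 * B x x) =o[𝓝 0] fun x => ‖x‖ ^ 2)
    (hφpos : ∀ δ > 0, ∃ ε > 0, ∀ x, δ ≤ ‖x‖ → ε ≤ φ x) (hg : ContinuousAt g 0)
    (hint : Integrable (fun x => rexp (-(β₀ * φ x)) • g x) μ) :
    Tendsto (fun s : ℝ => s ^ finrank ℝ E • ∫ x, rexp (-(s ^ 2 * φ x)) • g x ∂μ) atTop
      (𝓝 (∫ y, rexp (-(1 / 2 * B y y)) • g 0 ∂μ)) := by
  obtain ⟨c, hc, hcφ⟩ := exists_pos_eventually_mul_sq_norm_le hB hφ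
  have hgC : ∀ᶠ x in 𝓝 (0 : E), ‖g x‖ ≤ ‖g 0‖ + 1 :=
    hg.norm.eventually_le_const (lt_add_one ‖g 0‖)
  obtain ⟨δ, hδ, hball⟩ := Metric.eventually_nhds_iff_ball.1 (hcφ.and hgC)
  obtain ⟨ε, hε, hεφ⟩ := hφpos δ hδ
  have hfar : ∀ x ∈ (Metric.ball (0 : E) δ)ᶜ, ε ≤ φ x := fun x hx => hεφ x (by simpa using hx)
  have hφ0 : ∀ x, 0 ≤ φ x := fun x => by
    by_cases hx : x ∈ Metric.ball (0 : E) δ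
    · exact (by positivity : 0 ≤ c * ‖x‖ ^ 2).trans (hball x hx).1
    · exact hε.le.trans (hfar x hx)
  have hint_large : ∀ᶠ s : ℝ in atTop, Integrable (fun x => rexp (-(s ^ 2 * φ x)) • g x) μ := by
    filter_upwards [(tendsto_pow_atTop two_ne_zero).eventually_ge_atTop β₀] with s hs
    exact integrable_exp_neg_mul_smul_of_le hφm hφ0 hint hs
  have hnear_lim := tendsto_pow_finrank_smul_setIntegral_exp_neg_sq_mul_smul hφ hg
    measurableSet_ball (Metric.ball_mem_nhds 0 hδ) hc (fun x hx => (hball x hx).1)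
    (fun x hx => (hball x hx).2) (hint_large.mono fun s hs => hs.aestronglyMeasurable)
  have hfar_lim := tendsto_pow_smul_integral_exp_neg_sq_mul_smul_of_ae_le (finrank ℝ E) hε
    (ae_restrict_of_forall_mem measurableSet_ball.compl hfar) hint.integrableOn
  have hsum := hnear_lim.add hfar_lim
  rw [add_zero] at hsum
  refine hsum.congr' ?_
  filter_upwards [hint_large] with s hs
  rw [← smul_add, integral_add_compl measurableSet_ball hs]

theorem tendsto_sqrt_pow_finrank_smul_integral_exp_neg_mul_sub_smul {B : E →L[ℝ] E →L[ℝ] ℝ}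
    (hB : IsCoercive B) {f : E → ℝ} {g : E → F} {x₀ : E} {β₀ : ℝ} (hfm : AEMeasurable f μ)
    (hf : (fun x => f x - f x₀ - 1 / 2 * B (x - x₀) (x - x₀)) =o[𝓝 x₀] fun x => ‖x - x₀‖ ^ 2)
    (hfpos : ∀ δ > 0, ∃ ε > 0, ∀ x, δ ≤ dist x x₀ → f x₀ + ε ≤ f x) (hg : ContinuousAt g x₀)
    (hint : Integrable (fun x => rexp (-(β₀ * (f x - f x₀))) • g x) μ) :
    Tendsto (fun β : ℝ => √β ^ finrank ℝ E • ∫ x, rexp (-(β * (f x - f x₀))) • g x ∂μ) atTop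
      (𝓝 (∫ y, rexp (-(1 / 2 * B y y)) • g x₀ ∂μ)) := by
  have htrans : Tendsto (fun x => x₀ + x) (𝓝 0) (𝓝 x₀) := by
    simpa using (continuous_const_add x₀).tendsto 0
  have hcentred := tendsto_pow_finrank_smul_integral_exp_neg_sq_mul_smul hB
    (φ := fun x => f (x₀ + x) - f x₀) (g := fun x => g (x₀ + x)) (μ := μ) (β₀ := β₀)
    ((hfm.comp_quasiMeasurePreserving (quasiMeasurePreserving_add_left μ x₀)).sub_const _)
    (by simpa only [Function.comp_def, add_sub_cancel_left] using hf.comp_tendsto htrans)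
    (fun δ hδ => (hfpos δ hδ).imp fun ε ⟨hε, hεf⟩ =>
      ⟨hε, fun x hx => le_sub_iff_add_le'.2 (hεf _ (by simpa [dist_eq_norm] using hx))⟩)
    (by rw [ContinuousAt, add_zero]; exact hg.tendsto.comp htrans)
    (hint.comp_add_left x₀)
  rw [add_zero] at hcentred
  refine (hcentred.comp tendsto_sqrt_atTop).congr' ?_
  filter_upwards [eventually_ge_atTop 0] with β hβ
  rw [Function.comp_apply, Real.sq_sqrt hβ,
    integral_add_left_eq_self (fun x => rexp (-(β * (f x - f x₀))) • g x) x₀]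

end LaplaceMethod

lemma integral_comp_linearMap {E F : Type*} [NormedAddCommGroup E] [NormedSpace ℝ E]
    [MeasurableSpace E] [BorelSpace E] [FiniteDimensional ℝ E] [NormedAddCommGroup F]
    [NormedSpace ℝ F] (μ : Measure E) [μ.IsAddHaarMeasure] {L : E →ₗ[ℝ] E}
    (hL : LinearMap.det L ≠ 0) (f : E → F) :
    ∫ x, f (L x) ∂μ = |(LinearMap.det L)⁻¹| • ∫ x, f x ∂μ := by
  have hemb : MeasurableEmbedding L :=
    (L.equivOfDetNeZero hL).toContinuousLinearEquiv.toHomeomorph.measurableEmbedding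
  rw [← hemb.integral_map, Measure.map_linearMap_addHaar_eq_smul_addHaar μ hL,
    integral_smul_measure, ENNReal.toReal_ofReal (abs_nonneg _)]

section EuclideanCoordinates

variable {ι : Type*} [Fintype ι]

lemma integral_exp_neg_mul_dotProduct_self (a : ℝ) :
    ∫ x : ι → ℝ, rexp (-(a * (x ⬝ᵥ x))) = √(π / a) ^ Fintype.card ι := by
  rw [← integral_gaussian a, ← integral_fintype_prod_volume_eq_pow]
  simp only [dotProduct, Finset.mul_sum, ← Finset.sum_neg_distrib, Real.exp_sum, sq, neg_mul]

variable [DecidableEq ι]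

open scoped MatrixOrder in
lemma integral_exp_neg_mul_dotProduct_mulVec {K : Matrix ι ι ℝ} (hK : K.PosDef) (a : ℝ) :
    ∫ x : ι → ℝ, rexp (-(a * (x ⬝ᵥ K *ᵥ x))) = √(π / a) ^ Fintype.card ι / √K.det := by
  set R := CFC.sqrt K
  have hRsq : R * R = K := CFC.sqrt_mul_sqrt_self K hK.posSemidef.nonneg
  have hRsymm : Rᵀ = R := (CFC.sqrt_nonneg K).posSemidef.isHermitian
  have hRdet : LinearMap.det (toLin' R) = √K.det := by
    simp [R, hK.posSemidef.det_sqrt]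
  have hquad (x : ι → ℝ) : x ⬝ᵥ K *ᵥ x = toLin' R x ⬝ᵥ toLin' R x := by
    rw [toLin'_apply, ← hRsq, ← mulVec_mulVec, dotProduct_mulVec, ← mulVec_transpose, hRsymm]
  have hdet_ne : LinearMap.det (toLin' R) ≠ 0 := by
    rw [hRdet]
    exact (Real.sqrt_pos.2 hK.det_pos).ne'
  simp only [hquad]
  rw [integral_comp_linearMap volume hdet_ne fun y => rexp (-(a * (y ⬝ᵥ y))),
    integral_exp_neg_mul_dotProduct_self, hRdet, abs_of_nonneg (by positivity), smul_eq_mul,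
    inv_mul_eq_div]

/-- The Hessian matrix of `V` at `q` in the standard basis: the curvature `K` of the well in the
Laplace asymptotics. The `(i, j)` entry is `∂_j (∂_i V) (q)`. It is defined through iterated
first-order `fderiv`s, so entries are `0` where a partial derivative fails to be differentiable. -/
noncomputable def hessianMatrix (V : (ι → ℝ) → ℝ) (q : ι → ℝ) : Matrix ι ι ℝ :=
  .of fun i j => fderiv ℝ (fun x => fderiv ℝ V x (Pi.single i 1)) q (Pi.single j 1)

lemma dotProduct_hessianMatrix_mulVec {V : (ι → ℝ) → ℝ} {q : ι → ℝ}
    (hV : DifferentiableAt ℝ (fderiv ℝ V) q) (x : ι → ℝ) :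
    x ⬝ᵥ hessianMatrix V q *ᵥ x = fderiv ℝ (fderiv ℝ V) q x x := by
  have hentry (i j : ι) : hessianMatrix V q i j =
      fderiv ℝ (fderiv ℝ V) q (Pi.single j 1) (Pi.single i 1) := by
    simp [hessianMatrix, fderiv_clm_apply hV (differentiableAt_const _)]
  have hx : x = ∑ i, x i • (Pi.single i 1 : ι → ℝ) := pi_eq_sum_univ' x
  conv_rhs => rw [hx]
  simp only [map_sum, map_smul, _root_.sum_apply, _root_.smul_apply, smul_eq_mul, dotProduct,
    mulVec, Finset.mul_sum, hentry]
  exact Finset.sum_congr rfl fun i _ => Finset.sum_congr rfl fun j _ => by ring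

lemma tendsto_sqrt_pow_card_mul_integral_exp_neg_mul_sub_mul {V g : (ι → ℝ) → ℝ} {q₀ : ι → ℝ}
    {β₀ : ℝ} (hVm : AEMeasurable V) (hV : ContDiffAt ℝ 2 V q₀) (hK : (hessianMatrix V q₀).PosDef)
    (hVpos : ∀ δ > 0, ∃ ε > 0, ∀ q, δ ≤ dist q q₀ → V q₀ + ε ≤ V q) (hg : ContinuousAt g q₀)
    (hint : Integrable fun q => rexp (-(β₀ * V q)) * g q) :
    Tendsto (fun β : ℝ => √β ^ Fintype.card ι * ∫ q, rexp (-(β * (V q - V q₀))) * g q) atTop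
      (𝓝 (√(2 * π) ^ Fintype.card ι / √(hessianMatrix V q₀).det * g q₀)) := by
  have hquad := dotProduct_hessianMatrix_mulVec
    ((hV.fderiv_right (m := 1) (by norm_num)).differentiableAt (by norm_num))
  have hcoercive : IsCoercive (fderiv ℝ (fderiv ℝ V) q₀) := isCoercive_of_pos fun x hx => by
    simpa [hquad] using hK.dotProduct_mulVec_pos hx
  have hcrit : fderiv ℝ V q₀ = 0 := IsLocalMin.fderiv_eq_zero <| Eventually.of_forall fun q => by
    rcases eq_or_ne q q₀ with rfl | hq
    · exact le_rfl
    · obtain ⟨ε, hε, hεV⟩ := hVpos _ (dist_pos.2 hq)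
      linarith [hεV q le_rfl]
  have hshift : Integrable fun q => rexp (-(β₀ * (V q - V q₀))) • g q := by
    convert! hint.const_mul (rexp (β₀ * V q₀)) using 2 with q
    rw [smul_eq_mul, ← mul_assoc, ← Real.exp_add]
    ring_nf
  have hlim := tendsto_sqrt_pow_finrank_smul_integral_exp_neg_mul_sub_smul hcoercive hVm
    (by simpa [hcrit] using taylor_two_isLittleO hV) hVpos hg hshift
  simp only [← hquad, smul_eq_mul, integral_mul_const, integral_exp_neg_mul_dotProduct_mulVec hK,
    finrank_fintype_fun_eq_card] at hlim
  have hscale : π / (1 / 2) = 2 * π := by ring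
  rwa [hscale] at hlim

lemma two_pi_mul_one_div_rpow_natCast_div_two {β : ℝ} (hβ : 0 ≤ β) (n : ℕ) :
    (2 * π * (1 / β)) ^ ((n : ℝ) / 2) = (√(2 * π) / √β) ^ n := by
  rw [Real.rpow_div_two_eq_sqrt _ (by positivity), Real.rpow_natCast, mul_one_div,
    Real.sqrt_div (by positivity)]

theorem laplace_partition_function_general {V g : (ι → ℝ) → ℝ} {q₀ : ι → ℝ} {β₀ : ℝ}
    (hVm : AEMeasurable V) (hV : ContDiffAt ℝ 2 V q₀) (hK : (hessianMatrix V q₀).PosDef)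
    (hVpos : ∀ δ > 0, ∃ ε > 0, ∀ q, δ ≤ dist q q₀ → V q₀ + ε ≤ V q) (hg : ContinuousAt g q₀)
    (hg0 : g q₀ ≠ 0) (hint : Integrable fun q => rexp (-(β₀ * V q)) * g q) :
    Tendsto
      (fun β : ℝ =>
        ((2 * π * (1 / β)) ^ ((Fintype.card ι : ℝ) / 2) * ∫ q, rexp (-(β * V q)) * g q) /
          ((2 * π * (1 / β)) ^ (Fintype.card ι : ℝ) * rexp (-(β * V q₀)) *
            (g q₀ / √(hessianMatrix V q₀).det)))
      atTop (𝓝 1) := by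
  have hdet : 0 < √(hessianMatrix V q₀).det := Real.sqrt_pos.2 hK.det_pos
  have hlim := (tendsto_sqrt_pow_card_mul_integral_exp_neg_mul_sub_mul hVm hV hK hVpos hg
    hint).div_const (√(2 * π) ^ Fintype.card ι / √(hessianMatrix V q₀).det * g q₀)
  rw [div_self (by positivity)] at hlim
  refine hlim.congr' ?_
  filter_upwards [eventually_gt_atTop 0] with β hβ
  have hexp (q : ι → ℝ) :
      rexp (-(β * (V q - V q₀))) = rexp (-(β * V q)) / rexp (-(β * V q₀)) := by
    rw [← Real.exp_sub]
    ring_nf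
  have hfull : (2 * π * (1 / β)) ^ (Fintype.card ι : ℝ) =
      ((√(2 * π) / √β) ^ Fintype.card ι) ^ 2 := by
    rw [← two_pi_mul_one_div_rpow_natCast_div_two hβ.le, ← Real.rpow_mul_natCast (by positivity)]
    norm_num
  simp only [hexp, div_mul_eq_mul_div, integral_div]
  rw [hfull, two_pi_mul_one_div_rpow_natCast_div_two hβ.le, div_pow]
  have := Real.sqrt_pos.2 hβ
  field_simp

end EuclideanCoordinates

/-- Laplace asymptotics for the partition function:
`Z(β) = (2πT)^{n/2} ∫ e^{−βV} √(det M) dq` satisfies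
`Z(β) ~ (2πT)^n e^{−βV(q_*)} √(det M(q_*)/det K)` as `T = 1/β → 0+`,
i.e. the ratio of the two sides tends to `1` as `β → ∞`. -/
theorem laplace_partition_function (n : ℕ)
    (V : (Fin n → ℝ) → ℝ) (hV : ContDiff ℝ 2 V)
    (M : (Fin n → ℝ) → Matrix (Fin n) (Fin n) ℝ)
    (hMcont : ∀ i j, Continuous fun q => M q i j)
    (hMpos : ∀ q, (M q).PosDef)
    (hdetbdd : ∃ C : ℝ, ∀ q, (M q).det ≤ C)
    (qstar : Fin n → ℝ)
    (hmin : ∀ q, q ≠ qstar → V qstar < V q)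
    (K : Matrix (Fin n) (Fin n) ℝ)
    (hK : ∀ i j, K i j =
      fderiv ℝ (fun q => fderiv ℝ V q (Pi.single i 1)) qstar (Pi.single j 1))
    (hKpos : K.PosDef)
    (hint : ∀ β > (0 : ℝ),
      Integrable fun q => Real.exp (-(β * V q)) * Real.sqrt (M q).det)
    (hcoer : ∀ δ > (0 : ℝ), ∃ ε > (0 : ℝ),
      ∀ q, δ ≤ dist q qstar → V qstar + ε ≤ V q) :
    Tendsto
      (fun β : ℝ =>
        ((2 * π * (1 / β)) ^ ((n : ℝ) / 2) *
            ∫ q, Real.exp (-(β * V q)) * Real.sqrt (M q).det) /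
          ((2 * π * (1 / β)) ^ (n : ℝ) * Real.exp (-(β * V qstar)) *
            Real.sqrt ((M qstar).det / K.det)))
      atTop (nhds 1) := by
  obtain rfl : K = hessianMatrix V qstar := Matrix.ext hK
  have hMdet : Continuous fun q => √(M q).det := (continuous_matrix hMcont).matrix_det.sqrt
  simpa [Real.sqrt_div (hMpos qstar).det_pos.le] using
    laplace_partition_function_general hV.continuous.aemeasurable hV.contDiffAt hKpos hcoer
      hMdet.continuousAt (Real.sqrt_pos.2 (hMpos qstar).det_pos).ne' (hint 1 one_pos)
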